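/- arXiv:1809.03696 — 2 statements merged into one kernel-verified Lean document; each statement's English description precedes it below -/
import Mathlib

section
/- Let Γ be a connected finite simple graph on n vertices that is strongly regular with parameters (n, k, λ, μ) with 0 < k < n − 1, let r > s be the two real roots of x² + (μ − λ)x + (μ − k), and let f and g denote the multiplicities of r and s as eigenvalues of the adjacency matrix of Γ. If f ≠ g, then r and s are integers. -/
open Matrix

lemma aux_trace {V : Type*} [Fintype V] [DecidableEq V] (A : Matrix V V ℝ)
    (r s k : ℝ) (hrs : r ≠ s) (hrk : r ≠ k)
    (hA : (A - r • (1 : Matrix V V ℝ)) * ((A - s • (1 : Matrix V V ℝ)) * (A - k • (1 : Matrix V V ℝ))) = 0) :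
    (Module.finrank ℝ (Module.End.eigenspace (Matrix.mulVecLin A) r) : ℝ) * ((r - s) * (r - k))
      = Matrix.trace ((A - s • (1 : Matrix V V ℝ)) * (A - k • (1 : Matrix V V ℝ))) := by
  set B := (A - s • (1 : Matrix V V ℝ)) * (A - k • (1 : Matrix V V ℝ)) with hB
  have hc : (r - s) * (r - k) ≠ 0 := mul_ne_zero (sub_ne_zero.2 hrs) (sub_ne_zero.2 hrk)
  have hproj : LinearMap.IsProj (Module.End.eigenspace (Matrix.mulVecLin A) r)
      (Matrix.toLin' (((r - s) * (r - k))⁻¹ • B)) := by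
    constructor
    · intro x
      rw [Module.End.mem_eigenspace_iff]
      have h1 : A * B = r • B := by
        rw [sub_mul, sub_eq_zero] at hA
        simpa using hA
      simp [Matrix.smul_mulVec, Matrix.mulVec_mulVec, h1]
      rw [smul_comm]
    · intro x hx
      rw [Module.End.mem_eigenspace_iff, Matrix.mulVecLin_apply] at hx
      have h1 : B *ᵥ x = ((r - s) * (r - k)) • x := by
        rw [hB, ← Matrix.mulVec_mulVec]
        simp only [Matrix.sub_mulVec, Matrix.smul_mulVec, Matrix.one_mulVec, hx, Matrix.mulVec_sub,
          Matrix.mulVec_smul]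
        module
      rw [Matrix.toLin'_apply, Matrix.smul_mulVec, h1, smul_smul, inv_mul_cancel₀ hc, one_smul]
  have ht := hproj.trace
  rw [Matrix.trace_toLin'_eq, Matrix.trace_smul, smul_eq_mul] at ht
  rw [← ht]
  field_simp

lemma aux_int (r : ℝ) (q : ℚ) (a b : ℤ) (hq : r = q) (h : r ^ 2 + a * r + b = 0) :
    ∃ z : ℤ, r = z := by
  subst hq
  have h' : q ^ 2 + a * q + b = 0 := by exact_mod_cast h
  have hi : IsIntegral ℤ q := by
    refine ⟨Polynomial.X ^ 2 + Polynomial.C a * Polynomial.X + Polynomial.C b, by monicity!, ?_⟩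
    simp only [Polynomial.eval₂_add, Polynomial.eval₂_mul, Polynomial.eval₂_pow, Polynomial.eval₂_X,
      Polynomial.eval₂_C]
    simpa using h'
  obtain ⟨z, hz⟩ := IsIntegrallyClosed.isIntegral_iff.1 hi
  exact ⟨z, by rw [← hz]; simp⟩

theorem stmt_9 {V : Type*} [Fintype V] [DecidableEq V]
    (Γ : SimpleGraph V) [DecidableRel Γ.Adj]
    (n k l m : ℕ) (h : Γ.IsSRGWith n k l m) (hconn : Γ.Connected)
    (hk0 : 0 < k) (hkn : k + 1 < n)
    (r s : ℝ) (hrs : s < r)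
    (hr : r ^ 2 + ((m : ℝ) - l) * r + ((m : ℝ) - k) = 0)
    (hs : s ^ 2 + ((m : ℝ) - l) * s + ((m : ℝ) - k) = 0)
    (f g : ℕ)
    (hf : f = Module.finrank ℝ
      (Module.End.eigenspace (Matrix.mulVecLin (Γ.adjMatrix ℝ)) r))
    (hg : g = Module.finrank ℝ
      (Module.End.eigenspace (Matrix.mulVecLin (Γ.adjMatrix ℝ)) s))
    (hfg : f ≠ g) :
    (∃ a : ℤ, r = a) ∧ (∃ b : ℤ, s = b) := by
  have hne : r - s ≠ 0 := by linarith [hrs] |> fun (h : 0 < r - s) => h.ne'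
  have hsum : r + s = l - m := by
    apply mul_left_cancel₀ hne
    linear_combination hr - hs
  have hprod : r * s = m - k := by
    linear_combination r * hsum - hr
  suffices H : ∃ a : ℤ, r = a by
    obtain ⟨a, ha⟩ := H
    exact ⟨⟨a, ha⟩, ⟨l - m - a, by push_cast; linarith⟩⟩
  by_cases hrk : r = k
  · exact ⟨k, by simpa using hrk⟩
  by_cases hsk : s = k
  · exact ⟨l - m - k, by push_cast; linarith⟩
  set A := Γ.adjMatrix ℝ with hA
  have hJ : A * A - (r + s) • A + (r * s) • (1 : Matrix V V ℝ) = (m : ℝ) • Matrix.of (fun _ _ => (1 : ℝ)) := by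
    have h1 := h.matrix_eq (α := ℝ)
    have h2 := Γ.one_add_adjMatrix_add_compl_adjMatrix_eq_of_one (α := ℝ)
    rw [SimpleGraph.compl_adjMatrix_eq_adjMatrix_compl] at h2
    rw [← hA] at h1 h2
    change _ = (m : ℝ) • Matrix.of 1
    rw [← h2, ← pow_two, h1, hsum, hprod]
    simp only [← Nat.cast_smul_eq_nsmul ℝ]
    module
  have hJA : Matrix.of (fun _ _ => (1 : ℝ)) * (A - (k : ℝ) • (1 : Matrix V V ℝ)) = 0 := by
    ext i j
    simp [mul_sub, hA, h.regular.degree_eq]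
  have hcub : (A - r • (1 : Matrix V V ℝ)) * ((A - s • (1 : Matrix V V ℝ)) * (A - (k : ℝ) • (1 : Matrix V V ℝ))) = 0 := by
    rw [← mul_assoc]
    have : (A - r • (1 : Matrix V V ℝ)) * (A - s • (1 : Matrix V V ℝ)) = A * A - (r + s) • A + (r * s) • (1 : Matrix V V ℝ) := by
      simp only [sub_mul, mul_sub, smul_mul_assoc, mul_smul_comm, one_mul, mul_one]
      module
    rw [this, hJ, smul_mul_assoc, hJA, smul_zero]
  have hcub' : (A - s • (1 : Matrix V V ℝ)) * ((A - r • (1 : Matrix V V ℝ)) * (A - (k : ℝ) • (1 : Matrix V V ℝ))) = 0 := by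
    rw [← mul_assoc]
    have : (A - s • (1 : Matrix V V ℝ)) * (A - r • (1 : Matrix V V ℝ)) = A * A - (r + s) • A + (r * s) • (1 : Matrix V V ℝ) := by
      simp only [sub_mul, mul_sub, smul_mul_assoc, mul_smul_comm, one_mul, mul_one]
      module
    rw [this, hJ, smul_mul_assoc, hJA, smul_zero]
  have htr : ∀ t : ℝ, Matrix.trace ((A - t • (1 : Matrix V V ℝ)) * (A - (k : ℝ) • (1 : Matrix V V ℝ)))
      = n * k + n * (t * k) := by
    intro t
    have hAA : Matrix.trace (A * A) = n * k := by
      simp only [Matrix.trace, hA, Matrix.diag_apply, SimpleGraph.adjMatrix_mul_self_apply_self,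
        h.regular.degree_eq]
      simp [h.card]
    have hA0 : Matrix.trace A = 0 := Γ.trace_adjMatrix ℝ
    simp only [sub_mul, mul_sub, smul_mul_assoc, mul_smul_comm, one_mul, mul_one, Matrix.trace_sub,
      Matrix.trace_smul, hAA, hA0, Matrix.trace_one, h.card, smul_eq_mul]
    ring
  have e1 := aux_trace A r s k hrs.ne' hrk hcub
  have e2 := aux_trace A s r k hrs.ne hsk hcub'
  rw [htr, ← hf] at e1
  rw [htr, ← hg] at e2
  have e3 : (f : ℝ) * (r - k) + g * (s - k) = - (n * k) := by
    apply mul_left_cancel₀ hne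
    linear_combination e1 - e2
  have hfg' : (f : ℝ) - g ≠ 0 := sub_ne_zero.2 (by exact_mod_cast hfg)
  have e4 : r = ((k * (f + g) - n * k - g * (l - m)) / (f - g) : ℚ) := by
    push_cast
    rw [eq_div_iff hfg']
    linear_combination e3 - g * hsum
  exact aux_int r _ (m - l) (m - k) e4 (by push_cast; exact hr)
end

section
/- Fix a natural number m ≥ 2 and equip V = (ZMod 2)^{2m} with the standard symplectic bilinear form B(x, y) = Σ_{i=0}^{m−1} (x_{2i} y_{2i+1} + x_{2i+1} y_{2i}). Let Γ' be the simple graph whose vertices are the nonzero vectors of V, with distinct x and y adjacent exactly when B(x, y) = 0. Then Γ' is strongly regular with parameters (2^{2m} − 1, 2^{2m−1} − 2, 2^{2m−2} − 3, 2^{2m−2} − 1), and the eigenvalues of its adjacency matrix over ℝ are 2^{2m−1} − 2 with multiplicity 1, 2^{m−1} − 1 with multiplicity 2^{2m−1} + 2^{m−1} − 1, and −2^{m−1} − 1 with multiplicity 2^{2m−1} − 2^{m−1} − 1. -/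
open Matrix

open scoped Classical

/-- The standard symplectic bilinear form on `(ZMod 2)^(2m)`:
`B(x, y) = Σ_{i<m} (x_{2i} y_{2i+1} + x_{2i+1} y_{2i})`. -/
def sympForm (m : ℕ) (x y : Fin (2 * m) → ZMod 2) : ZMod 2 :=
  ∑ i : Fin m,
    (x ⟨2 * i.val, by have := i.isLt; omega⟩ * y ⟨2 * i.val + 1, by have := i.isLt; omega⟩
      + x ⟨2 * i.val + 1, by have := i.isLt; omega⟩ * y ⟨2 * i.val, by have := i.isLt; omega⟩)

/-- The codiagram (commuting graph) of the 3-transposition group `Sp_{2m}(2)`: the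
graph on nonzero vectors of `(ZMod 2)^(2m)`, with distinct `x`, `y` adjacent exactly
when `B(x, y) = 0`. -/
noncomputable def sympCograph (m : ℕ) :
    SimpleGraph {x : Fin (2 * m) → ZMod 2 // x ≠ 0} :=
  SimpleGraph.fromRel (fun a b => sympForm m a b = 0)


namespace SympAux

lemma form_add_right (m : ℕ) (x y z : Fin (2 * m) → ZMod 2) :
    sympForm m x (y + z) = sympForm m x y + sympForm m x z := by
  unfold sympForm
  rw [← Finset.sum_add_distrib]
  refine Finset.sum_congr rfl fun i _ => ?_
  simp only [Pi.add_apply]; ring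

lemma form_add_left (m : ℕ) (x y z : Fin (2 * m) → ZMod 2) :
    sympForm m (x + y) z = sympForm m x z + sympForm m y z := by
  unfold sympForm
  rw [← Finset.sum_add_distrib]
  refine Finset.sum_congr rfl fun i _ => ?_
  simp only [Pi.add_apply]; ring

lemma form_comm (m : ℕ) (x y : Fin (2 * m) → ZMod 2) :
    sympForm m x y = sympForm m y x := by
  unfold sympForm
  refine Finset.sum_congr rfl fun i _ => ?_
  ring

lemma form_self (m : ℕ) (x : Fin (2 * m) → ZMod 2) : sympForm m x x = 0 := by
  unfold sympForm
  refine Finset.sum_eq_zero fun i _ => ?_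
  rw [mul_comm]; exact CharTwo.add_self_eq_zero _

lemma form_zero_right (m : ℕ) (x : Fin (2 * m) → ZMod 2) : sympForm m x 0 = 0 := by
  simp [sympForm]

lemma form_zero_left (m : ℕ) (x : Fin (2 * m) → ZMod 2) : sympForm m 0 x = 0 := by
  simp [sympForm]

lemma zmod2 (a : ZMod 2) : a = 0 ∨ a = 1 := by revert a; decide

/-- nondegeneracy -/
lemma form_nondeg (m : ℕ) (x : Fin (2 * m) → ZMod 2) (hx : x ≠ 0) :
    ∃ y, sympForm m x y = 1 := by
  obtain ⟨j, hj⟩ := Function.ne_iff.mp hx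
  have hj1 : x j = 1 := (zmod2 (x j)).resolve_left hj
  have hjlt := j.isLt
  let i0 : Fin m := ⟨j.val / 2, by omega⟩
  rcases Nat.mod_two_eq_zero_or_one j.val with h | h
  · refine ⟨Pi.single ⟨j.val + 1, by omega⟩ 1, ?_⟩
    unfold sympForm
    rw [Finset.sum_eq_single i0]
    · have e : (⟨2 * i0.val, by have := i0.isLt; omega⟩ : Fin (2 * m)) = j := by
        ext; simp only [i0]; omega
      have e2 : (⟨2 * i0.val + 1, by have := i0.isLt; omega⟩ : Fin (2 * m))
          = ⟨j.val + 1, by omega⟩ := by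
        ext; simp only [i0]; omega
      rw [e, e2, hj1, Pi.single_eq_same, Pi.single_eq_of_ne]
      · simp
      · intro h; have := congrArg Fin.val h; simp at this
    · intro i _ hi
      have : i.val ≠ j.val / 2 := fun h => hi (Fin.ext h)
      rw [Pi.single_eq_of_ne, Pi.single_eq_of_ne]
      · simp
      · intro h; have := congrArg Fin.val h; simp at this; omega
      · intro h; have := congrArg Fin.val h; simp at this; omega
    · simp
  · refine ⟨Pi.single ⟨j.val - 1, by omega⟩ 1, ?_⟩
    unfold sympForm
    rw [Finset.sum_eq_single i0]
    · have e : (⟨2 * i0.val + 1, by have := i0.isLt; omega⟩ : Fin (2 * m)) = j := by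
        ext; simp only [i0]; omega
      have e2 : (⟨2 * i0.val, by have := i0.isLt; omega⟩ : Fin (2 * m))
          = ⟨j.val - 1, by omega⟩ := by
        ext; simp only [i0]; omega
      rw [e, e2, hj1, Pi.single_eq_same, Pi.single_eq_of_ne]
      · simp
      · intro h; have := congrArg Fin.val h; simp at this; omega
    · intro i _ hi
      have : i.val ≠ j.val / 2 := fun h => hi (Fin.ext h)
      rw [Pi.single_eq_of_ne, Pi.single_eq_of_ne]
      · simp
      · intro h; have := congrArg Fin.val h; simp at this; omega
      · intro h; have := congrArg Fin.val h; simp at this; omega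
    · simp

/-- the sign character -/
noncomputable def sgn (a : ZMod 2) : ℝ := if a = 0 then 1 else -1

lemma sgn_zero : sgn 0 = 1 := by simp [sgn]
lemma sgn_one : sgn 1 = -1 := by simp [sgn]

lemma sgn_add (a b : ZMod 2) : sgn (a + b) = sgn a * sgn b := by
  have h : (1 : ZMod 2) + 1 = 0 := by decide
  rcases zmod2 a with rfl | rfl <;> rcases zmod2 b with rfl | rfl <;>
    simp [sgn_zero, sgn_one, h]

lemma card_all (m : ℕ) : Fintype.card (Fin (2 * m) → ZMod 2) = 2 ^ (2 * m) := by
  simp [ZMod.card]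

lemma sum_sgn (m : ℕ) (x : Fin (2 * m) → ZMod 2) :
    ∑ y, sgn (sympForm m x y) = if x = 0 then (2 : ℝ) ^ (2 * m) else 0 := by
  split_ifs with hx
  · subst hx
    simp [form_zero_left, sgn_zero]
  · obtain ⟨y0, h0⟩ := form_nondeg m x hx
    have h := Equiv.sum_comp (Equiv.addRight y0) (fun y => sgn (sympForm m x y))
    simp only [Equiv.coe_addRight, form_add_right, h0, sgn_add, sgn_one, mul_neg_one,
      Finset.sum_neg_distrib] at h
    linarith

abbrev V (m : ℕ) := {x : Fin (2 * m) → ZMod 2 // x ≠ 0}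

lemma sum_nonzero (m : ℕ) (f : (Fin (2 * m) → ZMod 2) → ℝ) :
    ∑ y : V m, f y = ∑ y, f y - f 0 := by
  rw [← Finset.add_sum_erase Finset.univ f (Finset.mem_univ 0), add_sub_cancel_left]
  symm
  exact Finset.sum_subtype _ (by simp) f

lemma card_V (m : ℕ) : Fintype.card (V m) = 2 ^ (2 * m) - 1 := by
  rw [Fintype.card_subtype_compl, card_all]
  simp

lemma card_V_real (m : ℕ) : (Fintype.card (V m) : ℝ) = 2 ^ (2 * m) - 1 := by
  rw [card_V, Nat.cast_sub Nat.one_le_two_pow]; simp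

noncomputable def J (m : ℕ) : Matrix (V m) (V m) ℝ := Matrix.of fun _ _ => 1
noncomputable def H (m : ℕ) : Matrix (V m) (V m) ℝ :=
  Matrix.of fun x y => sgn (sympForm m x y)

lemma JJ (m : ℕ) : J m * J m = ((2 : ℝ) ^ (2 * m) - 1) • J m := by
  ext x y
  rw [Matrix.mul_apply]
  simp only [J, Matrix.of_apply, Matrix.smul_apply, mul_one, smul_eq_mul, Finset.sum_const,
    Finset.card_univ, nsmul_eq_mul, card_V_real]

lemma HJ (m : ℕ) : H m * J m = (-1 : ℝ) • J m := by
  ext x y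
  rw [Matrix.mul_apply]
  simp only [J, H, Matrix.of_apply, Matrix.smul_apply, mul_one, smul_eq_mul]
  rw [sum_nonzero m (fun y => sgn (sympForm m x y)), sum_sgn, if_neg x.2, form_zero_right,
    sgn_zero]
  simp

lemma JH (m : ℕ) : J m * H m = (-1 : ℝ) • J m := by
  ext x y
  rw [Matrix.mul_apply]
  simp only [J, H, Matrix.of_apply, Matrix.smul_apply, mul_one, one_mul, smul_eq_mul]
  simp only [form_comm m _ y]
  rw [sum_nonzero m (fun z => sgn (sympForm m y z)), sum_sgn, if_neg y.2, form_zero_right,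
    sgn_zero]
  simp

lemma HH (m : ℕ) : H m * H m = ((2 : ℝ) ^ (2 * m)) • (1 : Matrix (V m) (V m) ℝ) - J m := by
  ext x y
  rw [Matrix.mul_apply]
  simp only [J, H, Matrix.of_apply, Matrix.smul_apply, Matrix.sub_apply, smul_eq_mul]
  simp only [form_comm m _ y, ← sgn_add, ← form_add_left]
  rw [sum_nonzero m (fun z => sgn (sympForm m (x + y) z)), sum_sgn, form_zero_right,
    sgn_zero]
  congr 1
  have : ((x : Fin (2 * m) → ZMod 2) + y = 0) ↔ x = y := by
    rw [Subtype.ext_iff, funext_iff, funext_iff]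
    exact forall_congr' fun i => CharTwo.add_eq_zero
  simp only [this, Matrix.one_apply]
  split_ifs <;> simp

lemma adj_iff (m : ℕ) (x y : V m) :
    (sympCograph m).Adj x y ↔ x ≠ y ∧ sympForm m x y = 0 := by
  unfold sympCograph
  rw [SimpleGraph.fromRel_adj, form_comm m y x, or_self]

lemma A_eq (m : ℕ) : (sympCograph m).adjMatrix ℝ = (1 / 2 : ℝ) • (J m + H m) - 1 := by
  ext x y
  simp only [SimpleGraph.adjMatrix_apply, adj_iff, J, H, Matrix.of_apply, Matrix.smul_apply,
    Matrix.sub_apply, Matrix.add_apply, smul_eq_mul, Matrix.one_apply]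
  by_cases h : x = y
  · subst h; simp [form_self, sgn_zero]; norm_num
  · rcases zmod2 (sympForm m x y) with h' | h' <;> simp [h, h', sgn_zero, sgn_one]; norm_num

lemma AA (m : ℕ) : (sympCograph m).adjMatrix ℝ * (sympCograph m).adjMatrix ℝ
    = ((2 : ℝ) ^ (2 * m) / 4 - 2) • J m - H m + ((2 : ℝ) ^ (2 * m) / 4 + 1) • 1 := by
  rw [A_eq]
  simp only [sub_mul, mul_sub, add_mul, mul_add, smul_mul_assoc, mul_smul_comm, one_mul, mul_one,
    JJ, HJ, JH, HH, smul_add, smul_sub]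
  module

lemma finrank_of {ι : Type*} [Fintype ι] [DecidableEq ι] (A E F G : Matrix ι ι ℝ) (a b c : ℝ)
    (hab : a ≠ b) (hac : a ≠ c) (h1 : E + F + G = 1) (hE : A * E = a • E)
    (hF : F * A = b • F) (hG : G * A = c • G) :
    (Module.finrank ℝ (Module.End.eigenspace (Matrix.mulVecLin A) a) : ℝ) = E.trace := by
  have key : ∀ (F : Matrix ι ι ℝ) (b : ℝ), a ≠ b → F * A = b • F → ∀ f, A *ᵥ f = a • f →
      F *ᵥ f = 0 := by
    intro F b hab hF f hf
    have h : F *ᵥ (A *ᵥ f) = b • (F *ᵥ f) := by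
      rw [Matrix.mulVec_mulVec, hF, Matrix.smul_mulVec]
    rw [hf, Matrix.mulVec_smul] at h
    have h2 : (a - b) • (F *ᵥ f) = 0 := by rw [sub_smul, h, sub_self]
    exact (smul_eq_zero.mp h2).resolve_left (sub_ne_zero.mpr hab)
  have hp : LinearMap.IsProj (Module.End.eigenspace (Matrix.mulVecLin A) a)
      (Matrix.toLin' E) := by
    constructor
    · intro f
      rw [Module.End.mem_eigenspace_iff, Matrix.mulVecLin_apply, Matrix.toLin'_apply,
        Matrix.mulVec_mulVec, hE, Matrix.smul_mulVec]
    · intro f hf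
      rw [Module.End.mem_eigenspace_iff, Matrix.mulVecLin_apply] at hf
      rw [Matrix.toLin'_apply]
      have := congrArg (fun M => M *ᵥ f) h1
      simpa [Matrix.add_mulVec, key F b hab hF f hf, key G c hac hG f hf] using this
  have h := hp.trace
  rw [Matrix.trace_toLin'_eq] at h
  exact h.symm

noncomputable def E0 (m : ℕ) : Matrix (V m) (V m) ℝ := (1 / ((2 : ℝ) ^ (2 * m) - 1)) • J m
noncomputable def Ep (m : ℕ) (s : ℝ) : Matrix (V m) (V m) ℝ :=
  (1 / 2 : ℝ) • (1 - E0 m) + (1 / (2 * s)) • (H m + E0 m)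

lemma sum_E (m : ℕ) (s : ℝ) : E0 m + Ep m s + Ep m (-s) = 1 := by
  unfold Ep
  rw [mul_neg, one_div_neg_eq_neg_one_div]
  module

lemma AE0 (m : ℕ) (hn : (2 : ℝ) ^ (2 * m) - 1 ≠ 0) : (sympCograph m).adjMatrix ℝ * E0 m
    = ((2 : ℝ) ^ (2 * m) / 2 - 2) • E0 m := by
  rw [A_eq, E0]
  simp only [sub_mul, mul_sub, add_mul, mul_add, smul_mul_assoc, mul_smul_comm, one_mul, mul_one,
    JJ, HJ, JH, HH, smul_add, smul_sub, smul_smul]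
  match_scalars
  field_simp
  ring

lemma E0A (m : ℕ) (hn : (2 : ℝ) ^ (2 * m) - 1 ≠ 0) : E0 m * (sympCograph m).adjMatrix ℝ
    = ((2 : ℝ) ^ (2 * m) / 2 - 2) • E0 m := by
  rw [A_eq, E0]
  simp only [sub_mul, mul_sub, add_mul, mul_add, smul_mul_assoc, mul_smul_comm, one_mul, mul_one,
    JJ, HJ, JH, HH, smul_add, smul_sub, smul_smul]
  match_scalars
  field_simp
  ring

lemma AEp (m : ℕ) (s : ℝ) (hs : s ≠ 0) (hs2 : (2 : ℝ) ^ (2 * m) = s ^ 2) (hn : s ^ 2 - 1 ≠ 0) :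
    (sympCograph m).adjMatrix ℝ * Ep m s = (s / 2 - 1) • Ep m s := by
  rw [A_eq, Ep, E0]
  simp only [sub_mul, mul_sub, add_mul, mul_add, smul_mul_assoc, mul_smul_comm, one_mul, mul_one,
    JJ, HJ, JH, HH, smul_add, smul_sub, smul_smul]
  rw [hs2]
  match_scalars <;> field_simp <;> ring

lemma EpA (m : ℕ) (s : ℝ) (hs : s ≠ 0) (hs2 : (2 : ℝ) ^ (2 * m) = s ^ 2) (hn : s ^ 2 - 1 ≠ 0) :
    Ep m s * (sympCograph m).adjMatrix ℝ = (s / 2 - 1) • Ep m s := by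
  rw [A_eq, Ep, E0]
  simp only [sub_mul, mul_sub, add_mul, mul_add, smul_mul_assoc, mul_smul_comm, one_mul, mul_one,
    JJ, HJ, JH, HH, smul_add, smul_sub, smul_smul]
  rw [hs2]
  match_scalars <;> field_simp <;> ring

lemma trace_J (m : ℕ) : (J m).trace = (2 : ℝ) ^ (2 * m) - 1 := by
  simp only [Matrix.trace, Matrix.diag, J, Matrix.of_apply, Finset.sum_const, Finset.card_univ,
    nsmul_eq_mul, mul_one, card_V_real]

lemma trace_H (m : ℕ) : (H m).trace = (2 : ℝ) ^ (2 * m) - 1 := by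
  simp only [Matrix.trace, Matrix.diag, H, Matrix.of_apply, Finset.sum_const, Finset.card_univ,
    nsmul_eq_mul, mul_one, card_V_real, form_self, sgn_zero]

lemma trace_E0 (m : ℕ) (hn : (2 : ℝ) ^ (2 * m) - 1 ≠ 0) : (E0 m).trace = 1 := by
  rw [E0, Matrix.trace_smul, trace_J, smul_eq_mul]
  field_simp

lemma trace_Ep (m : ℕ) (s : ℝ) (hs : s ≠ 0) (hs2 : (2 : ℝ) ^ (2 * m) = s ^ 2)
    (hn : s ^ 2 - 1 ≠ 0) : (Ep m s).trace = s ^ 2 / 2 + s / 2 - 1 := by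
  rw [Ep, Matrix.trace_add, Matrix.trace_smul, Matrix.trace_smul, Matrix.trace_sub,
    Matrix.trace_add, trace_E0 m (by rwa [hs2]), trace_H, Matrix.trace_one, card_V_real, hs2]
  simp only [smul_eq_mul]
  field_simp
  ring

lemma AA_apply (m : ℕ) (x y : V m) :
    ((sympCograph m).adjMatrix ℝ * (sympCograph m).adjMatrix ℝ) x y =
      (Fintype.card ((sympCograph m).commonNeighbors x y) : ℝ) := by
  rw [Matrix.mul_apply, ← Set.toFinset_card]
  simp only [SimpleGraph.adjMatrix_apply, ← ite_and, mul_ite, mul_one, mul_zero]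
  rw [Finset.sum_boole]
  congr 2
  ext z
  simp [SimpleGraph.mem_commonNeighbors, SimpleGraph.adj_comm, and_comm]

lemma srg (m : ℕ) (hm : 2 ≤ m) :
    (sympCograph m).IsSRGWith (2 ^ (2 * m) - 1) (2 ^ (2 * m - 1) - 2)
      (2 ^ (2 * m - 2) - 3) (2 ^ (2 * m - 2) - 1) := by
  obtain ⟨k, rfl⟩ := Nat.exists_eq_add_of_le hm
  have e1 : 2 * (2 + k) - 1 = 2 * k + 3 := by omega
  have e2 : 2 * (2 + k) - 2 = 2 * k + 2 := by omega
  have p1 : (2 : ℝ) ^ (2 * (2 + k)) = 16 * 2 ^ (2 * k) := by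
    rw [show 2 * (2 + k) = 2 * k + 4 by ring, pow_add]; ring
  have q : 1 ≤ 2 ^ (2 * k) := Nat.one_le_two_pow
  refine ⟨card_V _, ?_, ?_, ?_⟩
  · intro x
    have h := congrFun (congrFun (AA (2 + k)) x) x
    rw [SimpleGraph.adjMatrix_mul_self_apply_self] at h
    simp only [Matrix.add_apply, Matrix.sub_apply, Matrix.smul_apply, J, H, Matrix.of_apply,
      form_self, sgn_zero, Matrix.one_apply_eq, smul_eq_mul, p1] at h
    rw [e1, pow_add]
    apply Nat.cast_injective (R := ℝ)
    rw [h, Nat.cast_sub (by omega)]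
    push_cast
    ring
  · intro x y hxy
    have h := congrFun (congrFun (AA (2 + k)) x) y
    rw [adj_iff] at hxy
    rw [AA_apply] at h
    simp only [Matrix.add_apply, Matrix.sub_apply, Matrix.smul_apply, J, H, Matrix.of_apply,
      hxy.2, sgn_zero, Matrix.one_apply_ne hxy.1, smul_eq_mul, p1] at h
    rw [e2, pow_add]
    apply Nat.cast_injective (R := ℝ)
    rw [Nat.cast_sub (by omega)]
    refine Eq.trans ?_ (h.trans ?_)
    · congr!
    push_cast
    ring
  · intro x y hne hxy
    have h := congrFun (congrFun (AA (2 + k)) x) y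
    rw [adj_iff] at hxy
    have h1 := (zmod2 (sympForm (2 + k) x y)).resolve_left (fun h => hxy ⟨hne, h⟩)
    rw [AA_apply] at h
    simp only [Matrix.add_apply, Matrix.sub_apply, Matrix.smul_apply, J, H, Matrix.of_apply,
      h1, sgn_one, Matrix.one_apply_ne hne, smul_eq_mul, p1] at h
    rw [e2, pow_add]
    apply Nat.cast_injective (R := ℝ)
    rw [Nat.cast_sub (by omega)]
    refine Eq.trans ?_ (h.trans ?_)
    · congr!
    push_cast
    ring

end SympAux

/-- For `m ≥ 2`, the graph on the nonzero vectors of the symplectic space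
`(ZMod 2)^(2m)` (distinct vectors adjacent iff perpendicular) is strongly regular
with parameters `(2^(2m) − 1, 2^(2m−1) − 2, 2^(2m−2) − 3, 2^(2m−2) − 1)`, and the
eigenvalues of its adjacency matrix over `ℝ` are `2^(2m−1) − 2` with multiplicity
`1`, `2^(m−1) − 1` with multiplicity `2^(2m−1) + 2^(m−1) − 1`, and `−2^(m−1) − 1`
with multiplicity `2^(2m−1) − 2^(m−1) − 1`. -/
theorem stmt_16 (m : ℕ) (hm : 2 ≤ m) :
    (sympCograph m).IsSRGWith (2 ^ (2 * m) - 1) (2 ^ (2 * m - 1) - 2)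
      (2 ^ (2 * m - 2) - 3) (2 ^ (2 * m - 2) - 1) ∧
    Module.finrank ℝ (Module.End.eigenspace
      (Matrix.mulVecLin ((sympCograph m).adjMatrix ℝ)) ((2 : ℝ) ^ (2 * m - 1) - 2)) = 1 ∧
    Module.finrank ℝ (Module.End.eigenspace
      (Matrix.mulVecLin ((sympCograph m).adjMatrix ℝ)) ((2 : ℝ) ^ (m - 1) - 1))
      = 2 ^ (2 * m - 1) + 2 ^ (m - 1) - 1 ∧
    Module.finrank ℝ (Module.End.eigenspace
      (Matrix.mulVecLin ((sympCograph m).adjMatrix ℝ)) (-(2 : ℝ) ^ (m - 1) - 1))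
      = 2 ^ (2 * m - 1) - 2 ^ (m - 1) - 1 := by
  refine ⟨SympAux.srg m hm, ?_⟩
  obtain ⟨k, rfl⟩ := Nat.exists_eq_add_of_le hm
  have e1 : 2 * (2 + k) - 1 = 2 * k + 3 := by omega
  have e2 : 2 + k - 1 = k + 1 := by omega
  rw [e1, e2]
  set t : ℝ := 2 ^ k with ht
  have ht1 : 1 ≤ t := one_le_pow₀ (by norm_num)
  have hs2 : (2 : ℝ) ^ (2 * (2 + k)) = (4 * t) ^ 2 := by
    rw [ht, show 2 * (2 + k) = k * 2 + 4 by ring, pow_add, pow_mul]; ring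
  have hs2' : (2 : ℝ) ^ (2 * (2 + k)) = (-(4 * t)) ^ 2 := by rw [hs2]; ring
  have hs : 4 * t ≠ 0 := by positivity
  have hs' : -(4 * t) ≠ 0 := neg_ne_zero.mpr hs
  have hn : (4 * t) ^ 2 - 1 ≠ 0 := by nlinarith
  have hn' : (-(4 * t)) ^ 2 - 1 ≠ 0 := by rwa [neg_sq]
  have hn0 : (2 : ℝ) ^ (2 * (2 + k)) - 1 ≠ 0 := by rwa [hs2]
  have t1 : (2 : ℝ) ^ (2 * k + 3) - 2 = 2 ^ (2 * (2 + k)) / 2 - 2 := by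
    rw [show 2 * (2 + k) = 2 * k + 4 by ring, pow_add, pow_add]; ring
  have t2 : (2 : ℝ) ^ (k + 1) - 1 = 4 * t / 2 - 1 := by rw [ht, pow_add]; ring
  have t3 : -(2 : ℝ) ^ (k + 1) - 1 = -(4 * t) / 2 - 1 := by rw [ht, pow_add]; ring
  rw [t1, t2, t3]
  have d12 : (2 : ℝ) ^ (2 * (2 + k)) / 2 - 2 ≠ 4 * t / 2 - 1 := by rw [hs2]; nlinarith
  have d13 : (2 : ℝ) ^ (2 * (2 + k)) / 2 - 2 ≠ -(4 * t) / 2 - 1 := by rw [hs2]; nlinarith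
  have d23 : 4 * t / 2 - 1 ≠ -(4 * t) / 2 - 1 := by intro h; linarith
  have S := SympAux.sum_E (2 + k) (4 * t)
  have q : 2 ^ (2 * k + 3) = 8 * (2 ^ k * 2 ^ k) := by
    rw [show 2 * k + 3 = k + k + 3 by ring, pow_add, pow_add]; ring
  have q2 : 2 ^ (k + 1) = 2 * 2 ^ k := by rw [pow_add]; ring
  have q1 : 1 ≤ 2 ^ k := Nat.one_le_two_pow
  have q3 : 2 ^ k ≤ 2 ^ k * 2 ^ k := by nlinarith
  refine ⟨?_, ?_, ?_⟩ <;> apply Nat.cast_injective (R := ℝ)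
  · rw [SympAux.finrank_of _ _ _ _ _ _ _ d12 d13 S (SympAux.AE0 _ hn0)
      (SympAux.EpA _ _ hs hs2 hn) (SympAux.EpA _ _ hs' hs2' hn'), SympAux.trace_E0 _ hn0]
    simp
  · rw [SympAux.finrank_of _ _ _ _ _ _ _ d12.symm d23 (by rw [← S]; abel)
      (SympAux.AEp _ _ hs hs2 hn) (SympAux.E0A _ hn0) (SympAux.EpA _ _ hs' hs2' hn'),
      SympAux.trace_Ep _ _ hs hs2 hn, q, q2, Nat.cast_sub (by omega)]
    push_cast
    rw [← ht]; ring
  · rw [SympAux.finrank_of _ _ _ _ _ _ _ d13.symm d23.symm (by rw [← S]; abel)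
      (SympAux.AEp _ _ hs' hs2' hn') (SympAux.E0A _ hn0) (SympAux.EpA _ _ hs hs2 hn),
      SympAux.trace_Ep _ _ hs' hs2' hn', q, q2, Nat.cast_sub (by omega),
      Nat.cast_sub (by omega)]
    push_cast
    rw [← ht]; ring
end
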